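/- arXiv:1404.0999 — 2 statements merged into one kernel-verified Lean document; each statement's English description precedes it below -/
import Mathlib

section
/- Let d ≥ 1 and let μ and ν be Borel probability measures on ℝ^d with finite first moments. Then μ ≤cx ν if and only if there exists a coupling λ of μ and ν that is a martingale coupling. -/
open MeasureTheory ProbabilityTheory Filter

noncomputable section

abbrev Euc (d : ℕ) : Type := EuclideanSpace ℝ (Fin d)

def FiniteFirstMoment {d : ℕ} (μ : Measure (Euc d)) : Prop :=
  Integrable (fun x => x) μ

def ConvexOrder {d : ℕ} (μ ν : Measure (Euc d)) : Prop :=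
  ∀ φ : Euc d → ℝ, ConvexOn ℝ Set.univ φ → Integrable φ μ → Integrable φ ν →
    ∫ x, φ x ∂μ ≤ ∫ x, φ x ∂ν

def CoordMono {d : ℕ} (φ : Euc d → ℝ) : Prop :=
  ∀ x y : Euc d, (∀ i, x i ≤ y i) → φ x ≤ φ y

def IncConvexOrder {d : ℕ} (μ ν : Measure (Euc d)) : Prop :=
  ∀ φ : Euc d → ℝ, ConvexOn ℝ Set.univ φ → CoordMono φ → Integrable φ μ → Integrable φ ν →
    ∫ x, φ x ∂μ ≤ ∫ x, φ x ∂ν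

def IsCoupling {d : ℕ} (lam : Measure (Euc d × Euc d)) (μ ν : Measure (Euc d)) : Prop :=
  lam.map Prod.fst = μ ∧ lam.map Prod.snd = ν

def fstSigma (d : ℕ) : MeasurableSpace (Euc d × Euc d) :=
  MeasurableSpace.comap Prod.fst inferInstance

def IsMartingaleCoupling {d : ℕ} (lam : Measure (Euc d × Euc d)) : Prop :=
  lam[(fun p : Euc d × Euc d => p.2) | fstSigma d] =ᵐ[lam] (fun p => p.1)

def IsSubmartingaleCoupling {d : ℕ} (lam : Measure (Euc d × Euc d)) : Prop :=
  ∀ᵐ p ∂lam, ∀ i, p.1 i ≤ (lam[(fun q : Euc d × Euc d => q.2) | fstSigma d]) p i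

/-!
A triple `(u, v, a)` of functions with `0 ≤ u x + a x (y - x) + v y` for all `x` and `y` satisfies
`0 ≤ ∫ u ∂μ + ∫ v ∂ν` whenever `μ` precedes `ν` in the convex order: the supremum over `x` of the
affine functions `y ↦ a x (x - y) - u x` is a convex function lying between `-u` and `v`. By the
M. Riesz extension theorem there is then a positive functional on the continuous functions of linear
growth on `E × E` that has marginals `μ` and `ν` and kills every gain `a x (y - x)`. Since the
marginals have finite first moments, no mass escapes to infinity, so the Riesz–Markov–Kakutani
measure of this functional represents it on all functions of linear growth; it is the martingale
coupling. The converse is the conditional Jensen inequality.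
-/

open scoped Topology CompactlySupported

theorem exists_convexOn_between {V : Type*} [AddCommGroup V] [Module ℝ V] {u v : V → ℝ}
    {a : V → Module.Dual ℝ V} (h : ∀ x y, 0 ≤ u x + a x (y - x) + v y) :
    ∃ φ : V → ℝ, ConvexOn ℝ Set.univ φ ∧ (∀ x, -u x ≤ φ x) ∧ ∀ y, φ y ≤ v y := by
  have hle (y x : V) : a x (x - y) - u x ≤ v y := by
    have := h x y
    rw [← neg_sub x y, map_neg] at this
    linarith
  have hge (y x : V) : a x (x - y) - u x ≤ ⨆ z, (a z (z - y) - u z) :=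
    le_ciSup ⟨v y, Set.forall_mem_range.2 (hle y)⟩ x
  refine ⟨fun y => ⨆ x, (a x (x - y) - u x), ⟨convex_univ, fun y _ z _ s t hs ht hst => ?_⟩,
    fun x => by simpa using hge x x, fun y => ciSup_le (hle y)⟩
  refine ciSup_le fun x => ?_
  calc a x (x - (s • y + t • z)) - u x
      = s • (a x (x - y) - u x) + t • (a x (x - z) - u x) := by
        simp only [map_sub, map_add, map_smul, smul_eq_mul]
        linear_combination (u x - a x x) * hst
    _ ≤ _ := by gcongr <;> apply hge

theorem exists_nonneg_linearMap_comp_eq {V W : Type*} [AddCommMonoid V] [Module ℝ V]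
    [AddCommGroup W] [Module ℝ W] (s : PointedCone ℝ W) (T : V →ₗ[ℝ] W) (ℓ : V →ₗ[ℝ] ℝ)
    (hℓ : ∀ v, T v ∈ s → 0 ≤ ℓ v) (hT : ∀ w, ∃ v, T v + w ∈ s) :
    ∃ L : W →ₗ[ℝ] ℝ, (∀ v, L (T v) = ℓ v) ∧ ∀ w ∈ s, 0 ≤ L w := by
  let : AddCommGroup V := Module.addCommMonoidToAddCommGroup ℝ
  have hker : ℓ ∈ (LinearMap.ker T).dualAnnihilator := by
    rw [Submodule.mem_dualAnnihilator]
    intro v hv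
    have hpos : 0 ≤ ℓ v := hℓ v (by simp [LinearMap.mem_ker.1 hv])
    have hneg : 0 ≤ ℓ (-v) := hℓ (-v) (by simp [LinearMap.mem_ker.1 hv])
    rw [map_neg] at hneg
    linarith
  rw [← LinearMap.range_dualMap_eq_dualAnnihilator_ker] at hker
  obtain ⟨g, rfl⟩ := hker
  obtain ⟨L, hLg, hL⟩ := riesz_extension s ⟨LinearMap.range T, g.domRestrict _⟩
    (by rintro ⟨_, v, rfl⟩ hv; exact hℓ v hv)
    (fun w => (hT w).imp' (fun v => ⟨T v, v, rfl⟩) fun _ hv => hv)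
  exact ⟨L, fun v => hLg ⟨T v, v, rfl⟩, hL⟩

/-- The continuous real functions on `E` that are `O(1 + ‖x‖)`: the test functions adapted to
measures with a finite first moment. -/
def linearGrowth (E : Type*) [NormedAddCommGroup E] : Submodule ℝ C(E, ℝ) where
  carrier := {f | f =O[⊤] fun x => 1 + ‖x‖}
  zero_mem' := Asymptotics.isBigO_zero _ _
  add_mem' := Asymptotics.IsBigO.add
  smul_mem' c _ hf := hf.const_smul_left c

namespace linearGrowth

section Basic

variable {E : Type*} [NormedAddCommGroup E]

theorem exists_abs_le (f : linearGrowth E) : ∃ C, 0 ≤ C ∧ ∀ x, |f.1 x| ≤ C * (1 + ‖x‖) := by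
  obtain ⟨C, hC, h⟩ := f.2.exists_nonneg
  refine ⟨C, hC, fun x => ?_⟩
  simpa [abs_of_nonneg (add_nonneg zero_le_one (norm_nonneg x))] using
    Asymptotics.isBigOWith_top.1 h x

theorem exists_abs_prod_le {F : Type*} [NormedAddCommGroup F] (f : linearGrowth (E × F)) :
    ∃ C, ∀ p, |f.1 p| ≤ C * (1 + ‖p.1‖) + C * (1 + ‖p.2‖) := by
  obtain ⟨C, hC, hf⟩ := exists_abs_le f
  refine ⟨C, fun p => (hf p).trans ?_⟩
  have hp : ‖p‖ ≤ ‖p.1‖ + ‖p.2‖ := max_le_add_of_nonneg (norm_nonneg _) (norm_nonneg _)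
  calc C * (1 + ‖p‖) ≤ C * ((1 + ‖p.1‖) + (1 + ‖p.2‖)) :=
        mul_le_mul_of_nonneg_left (by linarith) hC
    _ = C * (1 + ‖p.1‖) + C * (1 + ‖p.2‖) := mul_add _ _ _

variable (E) in
/-- The weight `1 + ‖x‖` that defines linear growth, as an element of `linearGrowth E`. -/
def weight : linearGrowth E :=
  ⟨⟨fun x => 1 + ‖x‖, by fun_prop⟩, Asymptotics.isBigO_refl _ _⟩

@[simp]
theorem weight_apply (x : E) : (weight E).1 x = 1 + ‖x‖ := rfl

/-- The inclusion of the compactly supported continuous functions. -/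
def ofCompactlySupported : C_c(E, ℝ) →ₗ[ℝ] linearGrowth E where
  toFun g := ⟨g, by
    obtain ⟨C, hC⟩ := g.continuous.bounded_above_of_compact_support g.hasCompactSupport
    refine Asymptotics.isBigO_top.2 ⟨C, fun x => (hC x).trans ?_⟩
    rw [Real.norm_of_nonneg (by positivity)]
    exact le_mul_of_one_le_right ((norm_nonneg _).trans (hC 0)) (by simp)⟩
  map_add' _ _ := rfl
  map_smul' _ _ := rfl

@[simp]
theorem ofCompactlySupported_apply (g : C_c(E, ℝ)) (x : E) :
    (ofCompactlySupported g).1 x = g x := rfl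

variable [NormedSpace ℝ E] {F : Type*} [NormedAddCommGroup F] [NormedSpace ℝ F]

/-- Composition with a continuous linear map. -/
def pullback (g : F →L[ℝ] E) : linearGrowth E →ₗ[ℝ] linearGrowth F where
  toFun f := ⟨f.1.comp g, by
    refine (f.2.comp_tendsto tendsto_top).trans (Asymptotics.isBigO_top.2 ⟨1 + ‖g‖, fun x => ?_⟩)
    have hx : 0 ≤ 1 + ‖x‖ := by positivity
    calc ‖1 + ‖g x‖‖ = 1 + ‖g x‖ := Real.norm_of_nonneg (by positivity)
      _ ≤ 1 + ‖g‖ * ‖x‖ := by gcongr; exact g.le_opNorm x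
      _ ≤ (1 + ‖g‖) * (1 + ‖x‖) := by linarith [norm_nonneg x, norm_nonneg g]
      _ = (1 + ‖g‖) * ‖1 + ‖x‖‖ := by rw [Real.norm_of_nonneg hx]⟩
  map_add' _ _ := rfl
  map_smul' _ _ := rfl

@[simp]
theorem pullback_apply (g : F →L[ℝ] E) (f : linearGrowth E) (x : F) :
    (pullback g f).1 x = f.1 (g x) := rfl

/-- The gain `(x, y) ↦ a x (y - x)` of the trading strategy `a`, which has mean zero under every
martingale coupling. -/
def gain : C_c(E, StrongDual ℝ E) →ₗ[ℝ] linearGrowth (E × E) where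
  toFun a := ⟨⟨fun p => a p.1 (p.2 - p.1), by fun_prop⟩, by
    obtain ⟨C, hC⟩ := a.continuous.bounded_above_of_compact_support a.hasCompactSupport
    refine Asymptotics.isBigO_top.2 ⟨2 * C, fun p => ?_⟩
    have hC₀ : 0 ≤ C := (norm_nonneg _).trans (hC 0)
    have hp : ‖p.2 - p.1‖ ≤ 2 * (1 + ‖p‖) := by
      linarith [norm_sub_le p.2 p.1, norm_fst_le p, norm_snd_le p]
    calc ‖a p.1 (p.2 - p.1)‖ ≤ ‖a p.1‖ * ‖p.2 - p.1‖ := (a p.1).le_opNorm _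
      _ ≤ C * (2 * (1 + ‖p‖)) := by gcongr; exact hC _
      _ = 2 * C * ‖1 + ‖p‖‖ := by rw [Real.norm_of_nonneg (by positivity)]; ring⟩
  map_add' _ _ := rfl
  map_smul' _ _ := rfl

@[simp]
theorem gain_apply (a : C_c(E, StrongDual ℝ E)) (p : E × E) :
    (gain a).1 p = a p.1 (p.2 - p.1) := rfl

end Basic

section Integral

variable {E : Type*} [NormedAddCommGroup E] [MeasurableSpace E] {μ : Measure E}

theorem integrable_weight [IsFiniteMeasure μ] (hμ : Integrable (fun x => x) μ) :
    Integrable (weight E).1 μ :=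
  (integrable_const 1).add hμ.norm

theorem isFiniteMeasure (hμ : Integrable (weight E).1 μ) : IsFiniteMeasure μ := by
  have hone : Integrable (fun _ : E => (1 : ℝ)) μ :=
    hμ.mono' aestronglyMeasurable_const (.of_forall fun x => by simp)
  exact (integrable_const_iff.1 hone).resolve_left one_ne_zero

variable [OpensMeasurableSpace E]

theorem integrable (hμ : Integrable (weight E).1 μ) (f : linearGrowth E) : Integrable f.1 μ :=
  f.2.integrable f.1.continuous.aestronglyMeasurable hμ

/-- Integration against a measure with a finite first moment. -/
def integral (hμ : Integrable (weight E).1 μ) : linearGrowth E →ₗ[ℝ] ℝ where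
  toFun f := ∫ x, f.1 x ∂μ
  map_add' f g := integral_add (integrable hμ f) (integrable hμ g)
  map_smul' c f := integral_smul c f.1

theorem integral_apply (hμ : Integrable (weight E).1 μ) (f : linearGrowth E) :
    integral hμ f = ∫ x, f.1 x ∂μ := rfl

end Integral

section Truncation

variable {E : Type*} [NormedAddCommGroup E] [ProperSpace E]

variable (E) in
/-- A continuous cutoff, equal to `1` on the ball of radius `n` and to `0` outside the ball of
radius `n + 1`. -/
def cutoff (n : ℕ) : C_c(E, ℝ) where
  toFun x := max 0 (min 1 (n + 1 - ‖x‖))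
  hasCompactSupport' := by
    refine .of_support_subset_isCompact (isCompact_closedBall (0 : E) (n + 1)) fun x hx => ?_
    rw [mem_closedBall_zero_iff]
    contrapose! hx
    rw [Function.notMem_support]
    exact max_eq_left ((min_le_right _ _).trans (by linarith))

theorem cutoff_apply (n : ℕ) (x : E) : cutoff E n x = max 0 (min 1 (n + 1 - ‖x‖)) := rfl

theorem cutoff_nonneg (n : ℕ) (x : E) : 0 ≤ cutoff E n x := le_max_left _ _

theorem cutoff_le_one (n : ℕ) (x : E) : cutoff E n x ≤ 1 :=
  max_le zero_le_one (min_le_left _ _)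

theorem cutoff_eq_one {n : ℕ} {x : E} (hx : ‖x‖ ≤ n) : cutoff E n x = 1 := by
  rw [cutoff_apply, min_eq_left (by linarith), max_eq_right zero_le_one]

theorem tendsto_cutoff (x : E) : Tendsto (fun n => cutoff E n x) atTop (𝓝 1) :=
  tendsto_const_nhds.congr' <| (eventually_ge_atTop ⌈‖x‖⌉₊).mono fun _ hn =>
    (cutoff_eq_one (Nat.ceil_le.1 hn)).symm

/-- The product of `f` with the `n`-th cutoff. -/
def truncate (n : ℕ) (f : linearGrowth E) : C_c(E, ℝ) := f.1 • cutoff E n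

@[simp]
theorem truncate_apply (n : ℕ) (f : linearGrowth E) (x : E) :
    truncate n f x = f.1 x * cutoff E n x := rfl

variable (E) in
/-- The part of the weight that is removed by the `n`-th truncation. -/
def tail (n : ℕ) : linearGrowth E := weight E - ofCompactlySupported (truncate n (weight E))

theorem tail_apply (n : ℕ) (x : E) : (tail E n).1 x = (1 + ‖x‖) * (1 - cutoff E n x) := by
  simp [tail, mul_sub]

theorem tail_nonneg (n : ℕ) (x : E) : 0 ≤ (tail E n).1 x := by
  rw [tail_apply]
  exact mul_nonneg (by positivity) (sub_nonneg.2 (cutoff_le_one n x))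

theorem tail_prod_le {F : Type*} [NormedAddCommGroup F] [ProperSpace F] (n : ℕ) (p : E × F) :
    (tail (E × F) n).1 p ≤ (tail E n).1 p.1 + (tail F n).1 p.2 := by
  have h₁ := tail_nonneg n p.1
  have h₂ := tail_nonneg n p.2
  simp only [tail_apply, cutoff_apply] at *
  rcases max_choice ‖p.1‖ ‖p.2‖ with h | h <;> rw [← Prod.norm_def] at h <;> rw [h] <;> linarith

theorem exists_abs_sub_truncate_le (f : linearGrowth E) :
    ∃ C, ∀ n x, |f.1 x - truncate n f x| ≤ C * (tail E n).1 x := by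
  obtain ⟨C, -, hC⟩ := exists_abs_le f
  refine ⟨C, fun n x => ?_⟩
  have hχ : 0 ≤ 1 - cutoff E n x := sub_nonneg.2 (cutoff_le_one n x)
  calc |f.1 x - truncate n f x| = |f.1 x| * (1 - cutoff E n x) := by
        rw [truncate_apply, ← mul_one_sub, abs_mul, abs_of_nonneg hχ]
    _ ≤ C * (1 + ‖x‖) * (1 - cutoff E n x) := by gcongr; exact hC x
    _ = C * (tail E n).1 x := by rw [tail_apply, mul_assoc]

theorem tendsto_map_truncate (L : linearGrowth E →ₚ[ℝ] ℝ)
    (hL : Tendsto (fun n => L (tail E n)) atTop (𝓝 0)) (f : linearGrowth E) :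
    Tendsto (fun n => L (ofCompactlySupported (truncate n f))) atTop (𝓝 (L f)) := by
  obtain ⟨C, hC⟩ := exists_abs_sub_truncate_le f
  rw [tendsto_iff_norm_sub_tendsto_zero]
  refine squeeze_zero (fun n => norm_nonneg _) (fun n => ?_) (by simpa using hL.const_mul C)
  have hle : L (f - ofCompactlySupported (truncate n f)) ≤ L (C • tail E n) :=
    OrderHomClass.mono L fun x => (le_abs_self _).trans (hC n x)
  have hge : L (ofCompactlySupported (truncate n f) - f) ≤ L (C • tail E n) :=
    OrderHomClass.mono L fun x => (le_abs_self _).trans ((abs_sub_comm _ _).trans_le (hC n x))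
  rw [map_sub, map_smul, smul_eq_mul] at hle hge
  exact abs_sub_le_iff.2 ⟨hge, hle⟩

variable [MeasurableSpace E] [OpensMeasurableSpace E] {μ : Measure E}

theorem tendsto_integral_truncate (hμ : Integrable (weight E).1 μ) (f : linearGrowth E) :
    Tendsto (fun n => ∫ x, truncate n f x ∂μ) atTop (𝓝 (∫ x, f.1 x ∂μ)) := by
  refine tendsto_integral_of_dominated_convergence (fun x => ‖f.1 x‖)
    (fun n => (truncate n f).continuous.aestronglyMeasurable) (integrable hμ f).norm
    (fun n => .of_forall fun x => ?_) (.of_forall fun x => ?_)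
  · rw [truncate_apply, norm_mul, Real.norm_of_nonneg (cutoff_nonneg n x)]
    exact mul_le_of_le_one_right (norm_nonneg _) (cutoff_le_one n x)
  · simpa using (tendsto_cutoff x).const_mul (f.1 x)

theorem tendsto_integral_tail (hμ : Integrable (weight E).1 μ) :
    Tendsto (fun n => ∫ x, (tail E n).1 x ∂μ) atTop (𝓝 0) := by
  have h := (tendsto_integral_truncate hμ (weight E)).const_sub (∫ x, (weight E).1 x ∂μ)
  rw [sub_self] at h
  exact h.congr fun n => ((integral hμ).map_sub (weight E) _).symm

end Truncation

section Representation

variable {E : Type*} [NormedAddCommGroup E] [ProperSpace E] [MeasurableSpace E] [BorelSpace E]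

/-- The measure representing a positive functional on the compactly supported functions. It
represents the functional on all of `linearGrowth E` provided no mass escapes to infinity, see
`integral_rieszMeasure`. -/
def rieszMeasure (L : linearGrowth E →ₚ[ℝ] ℝ) : Measure E :=
  RealRMK.rieszMeasure <| PositiveLinearMap.mk₀ (L.toLinearMap ∘ₗ ofCompactlySupported)
    fun g hg => map_nonneg L (show 0 ≤ ofCompactlySupported g from hg)

variable (L : linearGrowth E →ₚ[ℝ] ℝ)

theorem integral_rieszMeasure_of_compactlySupported (g : C_c(E, ℝ)) :
    ∫ x, g x ∂rieszMeasure L = L (ofCompactlySupported g) :=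
  RealRMK.integral_rieszMeasure _ g

instance : IsFiniteMeasureOnCompacts (rieszMeasure L) := by
  unfold rieszMeasure; infer_instance

theorem integrable_weight_rieszMeasure : Integrable (weight E).1 (rieszMeasure L) := by
  have hball (n : ℕ) : IntegrableOn (weight E).1 (Metric.closedBall 0 n) (rieszMeasure L) :=
    (weight E).1.continuous.continuousOn.integrableOn_compact (isCompact_closedBall _ _)
  refine (aecover_closedBall tendsto_natCast_atTop_atTop).integrable_of_integral_norm_bounded
    (L (weight E)) hball (.of_forall fun n => ?_)
  have hw (x : E) : 0 ≤ (weight E).1 x := by rw [weight_apply]; positivity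
  have hnonneg (x : E) : 0 ≤ truncate n (weight E) x := mul_nonneg (hw x) (cutoff_nonneg n x)
  calc ∫ x in Metric.closedBall 0 n, ‖(weight E).1 x‖ ∂rieszMeasure L
      = ∫ x in Metric.closedBall 0 n, truncate n (weight E) x ∂rieszMeasure L := by
        refine setIntegral_congr_fun Metric.isClosed_closedBall.measurableSet fun x hx => ?_
        simp only [truncate_apply]
        rw [cutoff_eq_one (mem_closedBall_zero_iff.1 hx), mul_one, Real.norm_of_nonneg (hw x)]
    _ ≤ ∫ x, truncate n (weight E) x ∂rieszMeasure L :=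
        setIntegral_le_integral ((truncate n _).continuous.integrable_of_hasCompactSupport
          (truncate n _).hasCompactSupport) (.of_forall hnonneg)
    _ = L (ofCompactlySupported (truncate n (weight E))) :=
        integral_rieszMeasure_of_compactlySupported L _
    _ ≤ L (weight E) :=
        OrderHomClass.mono L fun x => mul_le_of_le_one_right (hw x) (cutoff_le_one n x)

variable {L} in
theorem integral_rieszMeasure (hL : Tendsto (fun n => L (tail E n)) atTop (𝓝 0))
    (f : linearGrowth E) : ∫ x, f.1 x ∂rieszMeasure L = L f := by
  refine tendsto_nhds_unique
    (tendsto_integral_truncate (integrable_weight_rieszMeasure L) f) ?_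
  simpa only [integral_rieszMeasure_of_compactlySupported] using tendsto_map_truncate L hL f

end Representation

end linearGrowth

section ConditionalExpectation

variable {E : Type*} [NormedAddCommGroup E] [NormedSpace ℝ E] [FiniteDimensional ℝ E]
  [MeasurableSpace E] [BorelSpace E] {Ω : Type*} {mΩ : MeasurableSpace Ω} {P : Measure Ω}
  [IsFiniteMeasure P]

theorem condExp_comap_ae_eq_zero {F : Type*} [NormedAddCommGroup F] [NormedSpace ℝ F]
    [CompleteSpace F] {X : Ω → E} {Z : Ω → F} (hX : Measurable X) (hZ : Integrable Z P)
    (h : ∀ θ : C_c(E, ℝ), ∫ ω, θ (X ω) • Z ω ∂P = 0) :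
    P[Z | MeasurableSpace.comap X inferInstance] =ᵐ[P] 0 := by
  obtain ⟨g, hg, hgX⟩ := (stronglyMeasurable_condExp (f := Z) (μ := P)
    (m := MeasurableSpace.comap X inferInstance)).exists_eq_measurable_comp
  have hgint : Integrable g (P.map X) := by
    rw [integrable_map_measure hg.aestronglyMeasurable hX.aemeasurable, ← hgX]
    exact integrable_condExp
  have hg₀ : ∀ᵐ x ∂P.map X, g x = 0 := by
    refine ae_eq_zero_of_integral_contDiff_smul_eq_zero hgint.locallyIntegrable fun θ hθ hθc => ?_
    have hθX : StronglyMeasurable[MeasurableSpace.comap X inferInstance] fun ω => θ (X ω) :=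
      (hθ.continuous.measurable.comp (comap_measurable X)).stronglyMeasurable
    obtain ⟨C, hC⟩ := hθ.continuous.bounded_above_of_compact_support hθc
    have hθZ : Integrable (fun ω => θ (X ω) • Z ω) P :=
      hZ.bdd_smul C (hθX.mono hX.comap_le).aestronglyMeasurable (.of_forall fun ω => hC (X ω))
    calc ∫ x, θ x • g x ∂P.map X
        = ∫ ω, θ (X ω) • P[Z | MeasurableSpace.comap X inferInstance] ω ∂P := by
          rw [hgX]
          exact integral_map hX.aemeasurable
            (hθ.continuous.aestronglyMeasurable.smul hg.aestronglyMeasurable)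
      _ = ∫ ω, P[fun ω => θ (X ω) • Z ω | MeasurableSpace.comap X inferInstance] ω ∂P :=
          integral_congr_ae (condExp_smul_of_aestronglyMeasurable_left
            hθX.aestronglyMeasurable hθZ hZ).symm
      _ = ∫ ω, θ (X ω) • Z ω ∂P := integral_condExp hX.comap_le
      _ = 0 := h ⟨⟨θ, hθ.continuous⟩, hθc⟩
  rw [hgX]
  exact ae_of_ae_map hX.aemeasurable hg₀

theorem condExp_comap_ae_eq_of_integral_smul_sub_eq_zero {X Y : Ω → E} (hXm : Measurable X)
    (hX : Integrable X P) (hY : Integrable Y P)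
    (h : ∀ θ : C_c(E, ℝ), ∫ ω, θ (X ω) • (Y ω - X ω) ∂P = 0) :
    P[Y | MeasurableSpace.comap X inferInstance] =ᵐ[P] X := by
  filter_upwards [condExp_comap_ae_eq_zero hXm (hY.sub hX) h,
    condExp_sub hY hX (MeasurableSpace.comap X inferInstance)] with ω h₀ hsub
  rw [hsub, Pi.sub_apply, condExp_of_stronglyMeasurable hXm.comap_le
    (comap_measurable X).stronglyMeasurable hX] at h₀
  exact sub_eq_zero.1 h₀

end ConditionalExpectation

/-- The convex order of measures on a real normed space; on `Euc d` this is `ConvexOrder`. -/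
def ConvexLE {E : Type*} [NormedAddCommGroup E] [NormedSpace ℝ E] [MeasurableSpace E]
    (μ ν : Measure E) : Prop :=
  ∀ φ : E → ℝ, ConvexOn ℝ Set.univ φ → Integrable φ μ → Integrable φ ν →
    ∫ x, φ x ∂μ ≤ ∫ x, φ x ∂ν

section Strassen

variable {E : Type*} [NormedAddCommGroup E] [NormedSpace ℝ E] [FiniteDimensional ℝ E]
  [MeasurableSpace E] [BorelSpace E] {μ ν : Measure E}

open linearGrowth

theorem convexLE_map_of_condExp_ae_eq {Ω : Type*} {m mΩ : MeasurableSpace Ω} {P : Measure Ω}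
    [IsFiniteMeasure P] {X Y : Ω → E} (hm : m ≤ mΩ) (hX : Measurable X) (hY : Measurable Y)
    (hYint : Integrable Y P) (h : P[Y | m] =ᵐ[P] X) : ConvexLE (P.map X) (P.map Y) := by
  intro φ hφ hφX hφY
  have hcont : Continuous φ := continuousOn_univ.1 (hφ.continuousOn isOpen_univ)
  have hφY' : Integrable (φ ∘ Y) P := hφY.comp_measurable hY
  have hJensen := hφ.map_condExp_le_univ hm hcont.lowerSemicontinuous hYint hφY'
  rw [integral_map hX.aemeasurable hcont.aestronglyMeasurable,
    integral_map hY.aemeasurable hcont.aestronglyMeasurable]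
  calc ∫ ω, φ (X ω) ∂P ≤ ∫ ω, P[φ ∘ Y | m] ω ∂P := by
        refine integral_mono_ae (hφX.comp_measurable hX) integrable_condExp ?_
        filter_upwards [hJensen, h] with ω hω hXω
        rwa [Function.comp_apply, hXω] at hω
    _ = ∫ ω, φ (Y ω) ∂P := integral_condExp hm

theorem ConvexLE.integral_add_integral_nonneg (h : ConvexLE μ ν)
    (hμ : Integrable (weight E).1 μ) (hν : Integrable (weight E).1 ν) {u v : linearGrowth E}
    {a : E → Module.Dual ℝ E} (huv : ∀ x y, 0 ≤ u.1 x + a x (y - x) + v.1 y) :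
    0 ≤ ∫ x, u.1 x ∂μ + ∫ y, v.1 y ∂ν := by
  obtain ⟨φ, hφ, huφ, hφv⟩ := exists_convexOn_between huv
  have hcont : Continuous φ := continuousOn_univ.1 (hφ.continuousOn isOpen_univ)
  have hφint {ρ : Measure E} (hρ : Integrable (weight E).1 ρ) : Integrable φ ρ :=
    ((integrable hρ u).norm.add (integrable hρ v).norm).mono' hcont.aestronglyMeasurable
      (.of_forall fun x => (abs_le_max_abs_abs (huφ x) (hφv x)).trans
        ((max_le_add_of_nonneg (abs_nonneg _) (abs_nonneg _)).trans_eq (by simp)))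
  have := calc -∫ x, u.1 x ∂μ = ∫ x, -u.1 x ∂μ := (integral_neg _).symm
    _ ≤ ∫ x, φ x ∂μ := integral_mono (integrable hμ u).neg (hφint hμ) huφ
    _ ≤ ∫ x, φ x ∂ν := h φ hφ (hφint hμ) (hφint hν)
    _ ≤ ∫ x, v.1 x ∂ν := integral_mono (hφint hν) (integrable hν v) hφv
  linarith

theorem ConvexLE.exists_positiveLinearMap (h : ConvexLE μ ν)
    (hμ : Integrable (weight E).1 μ) (hν : Integrable (weight E).1 ν) :
    ∃ L : linearGrowth (E × E) →ₚ[ℝ] ℝ,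
      (∀ u, L (pullback (.fst ℝ E E) u) = ∫ x, u.1 x ∂μ) ∧
      (∀ v, L (pullback (.snd ℝ E E) v) = ∫ y, v.1 y ∂ν) ∧ ∀ a, L (gain a) = 0 := by
  let T : linearGrowth E × linearGrowth E × C_c(E, StrongDual ℝ E) →ₗ[ℝ] linearGrowth (E × E) :=
    (pullback (.fst ℝ E E)).coprod ((pullback (.snd ℝ E E)).coprod gain)
  let ℓ : linearGrowth E × linearGrowth E × C_c(E, StrongDual ℝ E) →ₗ[ℝ] ℝ :=
    (integral hμ).coprod ((integral hν).coprod 0)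
  let s := (PointedCone.positive ℝ C(E × E, ℝ)).comap (linearGrowth (E × E)).subtype
  have hℓ : ∀ w, T w ∈ s → 0 ≤ ℓ w := by
    rintro ⟨u, v, a⟩ hnonneg
    have huv (x y : E) : 0 ≤ u.1 x + a x (y - x) + v.1 y :=
      (hnonneg (x, y)).trans_eq (by simp [T]; ring)
    simpa [ℓ, integral_apply] using h.integral_add_integral_nonneg hμ hν (a := fun x => a x) huv
  have hT (f : linearGrowth (E × E)) : ∃ w, T w + f ∈ s := by
    obtain ⟨C, hC⟩ := exists_abs_prod_le f
    refine ⟨(C • weight E, C • weight E, 0), fun p => ?_⟩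
    calc 0 ≤ C * (1 + ‖p.1‖) + C * (1 + ‖p.2‖) + f.1 p := by linarith [neg_abs_le (f.1 p), hC p]
      _ = (T (C • weight E, C • weight E, 0) + f).1 p := by simp [T]
  obtain ⟨L, hL, hpos⟩ := exists_nonneg_linearMap_comp_eq s T ℓ hℓ hT
  have hLμ (u : linearGrowth E) : L (pullback (.fst ℝ E E) u) = ∫ x, u.1 x ∂μ := by
    simpa [T, ℓ, integral_apply] using hL (u, 0, 0)
  have hLν (v : linearGrowth E) : L (pullback (.snd ℝ E E) v) = ∫ y, v.1 y ∂ν := by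
    simpa [T, ℓ, integral_apply] using hL (0, v, 0)
  have hLgain (a : C_c(E, StrongDual ℝ E)) : L (gain a) = 0 := by
    simpa [T, ℓ] using hL (0, 0, a)
  exact ⟨PositiveLinearMap.mk₀ L hpos, hLμ, hLν, hLgain⟩

theorem tendsto_map_tail_prod {L : linearGrowth (E × E) →ₚ[ℝ] ℝ}
    (hμ : Integrable (weight E).1 μ) (hν : Integrable (weight E).1 ν)
    (hLμ : ∀ u, L (pullback (.fst ℝ E E) u) = ∫ x, u.1 x ∂μ)
    (hLν : ∀ v, L (pullback (.snd ℝ E E) v) = ∫ y, v.1 y ∂ν) :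
    Tendsto (fun n => L (tail (E × E) n)) atTop (𝓝 0) := by
  refine squeeze_zero (fun n => map_nonneg L (tail_nonneg n)) (fun n => ?_)
    (by simpa using (tendsto_integral_tail hμ).add (tendsto_integral_tail hν))
  rw [← hLμ, ← hLν, ← map_add]
  exact OrderHomClass.mono L (tail_prod_le n)

theorem map_eq_of_integral_pullback_eq {F : Type*} [NormedAddCommGroup F] [NormedSpace ℝ F]
    [MeasurableSpace F] [BorelSpace F] {π : Measure F} [IsFiniteMeasure π] [IsFiniteMeasure μ]
    (g : F →L[ℝ] E)
    (h : ∀ f : linearGrowth E, ∫ x, (pullback g f).1 x ∂π = ∫ x, f.1 x ∂μ) : π.map g = μ := by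
  refine Measure.ext_of_integral_eq_on_compactlySupported fun f => ?_
  exact (integral_map g.continuous.aemeasurable f.continuous.aestronglyMeasurable).trans
    (h (ofCompactlySupported f))

theorem integral_smul_sub_eq_zero_of_integral_gain_eq_zero {π : Measure (E × E)}
    (hπ : Integrable (fun p => p.2 - p.1) π) (h : ∀ a, ∫ p, (gain a).1 p ∂π = 0) (θ : C_c(E, ℝ)) :
    ∫ p : E × E, θ p.1 • (p.2 - p.1) ∂π = 0 := by
  obtain ⟨C, hC⟩ := θ.continuous.bounded_above_of_compact_support θ.hasCompactSupport
  have hint : Integrable (fun p : E × E => θ p.1 • (p.2 - p.1)) π :=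
    hπ.bdd_smul C (θ.continuous.comp continuous_fst).aestronglyMeasurable
      (.of_forall fun p => hC p.1)
  refine SeparatingDual.eq_zero_of_forall_dual_eq_zero (R := ℝ) fun ℓ => ?_
  rw [← ℓ.integral_comp_comm hint]
  simp_rw [map_smul]
  exact h ⟨⟨fun x => θ x • ℓ, by fun_prop⟩, θ.hasCompactSupport.smul_right⟩

theorem ConvexLE.exists_martingale_coupling [IsProbabilityMeasure μ] [IsFiniteMeasure ν]
    (h : ConvexLE μ ν) (hμ : Integrable (fun x => x) μ) (hν : Integrable (fun x => x) ν) :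
    ∃ π : Measure (E × E), IsProbabilityMeasure π ∧
      (π.map Prod.fst = μ ∧ π.map Prod.snd = ν) ∧
      π[Prod.snd | MeasurableSpace.comap Prod.fst inferInstance] =ᵐ[π] Prod.fst := by
  obtain ⟨L, hLμ, hLν, hLgain⟩ :=
    h.exists_positiveLinearMap (integrable_weight hμ) (integrable_weight hν)
  have hint := integral_rieszMeasure
    (tendsto_map_tail_prod (integrable_weight hμ) (integrable_weight hν) hLμ hLν)
  have hfin : IsFiniteMeasure (rieszMeasure L) := isFiniteMeasure (integrable_weight_rieszMeasure L)
  have hfst : (rieszMeasure L).map Prod.fst = μ :=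
    map_eq_of_integral_pullback_eq (.fst ℝ E E) fun u => (hint _).trans (hLμ u)
  have hsnd : (rieszMeasure L).map Prod.snd = ν :=
    map_eq_of_integral_pullback_eq (.snd ℝ E E) fun v => (hint _).trans (hLν v)
  have hX : Integrable Prod.fst (rieszMeasure L) := by
    rw [← hfst] at hμ; exact hμ.comp_measurable measurable_fst
  have hY : Integrable Prod.snd (rieszMeasure L) := by
    rw [← hsnd] at hν; exact hν.comp_measurable measurable_snd
  refine ⟨rieszMeasure L, ?_, ⟨hfst, hsnd⟩, ?_⟩
  · have : IsProbabilityMeasure ((rieszMeasure L).map Prod.fst) := hfst ▸ inferInstance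
    exact Measure.isProbabilityMeasure_of_map Prod.fst
  · exact condExp_comap_ae_eq_of_integral_smul_sub_eq_zero measurable_fst hX hY
      (integral_smul_sub_eq_zero_of_integral_gain_eq_zero (hY.sub hX)
        fun a => (hint _).trans (hLgain a))

end Strassen

theorem strassen_martingale_coupling_general {E : Type*} [NormedAddCommGroup E] [NormedSpace ℝ E]
    [FiniteDimensional ℝ E] [MeasurableSpace E] [BorelSpace E] {μ ν : Measure E}
    [IsProbabilityMeasure μ] [IsProbabilityMeasure ν]
    (hμ : Integrable (fun x => x) μ) (hν : Integrable (fun x => x) ν) :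
    ConvexLE μ ν ↔ ∃ π : Measure (E × E), IsProbabilityMeasure π ∧
      (π.map Prod.fst = μ ∧ π.map Prod.snd = ν) ∧
      π[Prod.snd | MeasurableSpace.comap Prod.fst inferInstance] =ᵐ[π] Prod.fst := by
  refine ⟨fun h => h.exists_martingale_coupling hμ hν, ?_⟩
  rintro ⟨π, hπ, ⟨rfl, rfl⟩, hmart⟩
  exact convexLE_map_of_condExp_ae_eq measurable_fst.comap_le measurable_fst measurable_snd
    (hν.comp_measurable measurable_snd) hmart

/-- Strassen's theorem (convex order): μ ≤cx ν iff there is a martingale coupling. -/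
theorem strassen_martingale_coupling
    (d : ℕ) (hd : 1 ≤ d) (μ ν : Measure (Euc d))
    [IsProbabilityMeasure μ] [IsProbabilityMeasure ν]
    (hμ : FiniteFirstMoment μ) (hν : FiniteFirstMoment ν) :
    ConvexOrder μ ν ↔
      ∃ lam : Measure (Euc d × Euc d), IsProbabilityMeasure lam ∧
        IsCoupling lam μ ν ∧ IsMartingaleCoupling lam :=
  strassen_martingale_coupling_general hμ hν
end
end

section
/- Let d ≥ 1 and let μ and ν be Borel probability measures on ℝ^d with finite first moments. Then μ ≤icx ν if and only if there exists a coupling λ of μ and ν that is a submartingale coupling. -/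
open MeasureTheory ProbabilityTheory Filter

noncomputable section

/-!
A coupling is a positive linear functional on the continuous functions dominated by sums
`f x + g y`, with prescribed values on those sums. By the Riesz extension theorem there is such a
functional that is also nonnegative on a given cone `K`, provided that no element of `K` lies below
a sum with negative integral; the tightness of the two marginals then makes it a measure. For the
submartingale property, `K` consists of the functions `b x (y - x)` with `b x` a nonnegative linear
form. If `b x (y - x) ≤ f x + g y`, then `φ y = ⨆ x, (b x (y - x) - f x)` is increasing, convex and
squeezed between `-f` and `g`, so the order relation gives `0 ≤ ∫ φ dν - ∫ φ dμ ≤ ∫ g dν + ∫ f dμ`.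
The converse is Jensen's inequality for conditional expectations.
-/

open CompactlySupported BoundedContinuousFunction Topology
open scoped ENNReal NNReal

section PositiveFunctionals

variable {Z : Type*} [TopologicalSpace Z]

lemma exists_compactlySupported_eventually_eq_one [T2Space Z] [LocallyCompactSpace Z]
    [SigmaCompactSpace Z] :
    ∃ χ : ℕ → C_c(Z, ℝ), (∀ n z, χ n z ∈ Set.Icc (0 : ℝ) 1) ∧ ∀ z, ∀ᶠ n in atTop, χ n z = 1 := by
  let K : CompactExhaustion Z := default
  have hcutoff (n : ℕ) : ∃ χ : C_c(Z, ℝ), Set.EqOn χ 1 (K n) ∧ ∀ z, χ z ∈ Set.Icc (0 : ℝ) 1 := by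
    obtain ⟨χ, hone, -, hcomp, hmem⟩ := exists_continuous_one_zero_of_isCompact
      (K.isCompact n) isClosed_empty (Set.disjoint_empty _)
    exact ⟨⟨χ, hcomp⟩, hone, hmem⟩
  choose χ hone hmem using hcutoff
  refine ⟨χ, hmem, fun z => ?_⟩
  obtain ⟨N, hN⟩ := K.exists_mem z
  filter_upwards [eventually_ge_atTop N] with n hn using hone n (K.subset hn hN)

variable [MeasurableSpace Z]

lemma integral_eq_of_abs_le [OpensMeasurableSpace Z] {ρ : Measure Z}
    {W : Submodule ℝ C(Z, ℝ)} {L : W →ₗ[ℝ] ℝ}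
    (hL : ∀ h : W, 0 ≤ h.1 → Integrable h.1 ρ ∧ ∫ z, h.1 z ∂ρ ≤ L h) {h w : W}
    (hhw : |h.1| ≤ w.1) (hw : ∫ z, w.1 z ∂ρ = L w) : ∫ z, h.1 z ∂ρ = L h := by
  have hw_int : Integrable w.1 ρ := (hL w ((abs_nonneg h.1).trans hhw)).1
  have hh_int : Integrable h.1 ρ :=
    hw_int.mono' h.1.continuous.aestronglyMeasurable (.of_forall hhw)
  have hadd : ∫ z, (w + h).1 z ∂ρ ≤ L (w + h) :=
    (hL (w + h) (neg_le_iff_add_nonneg.1 ((neg_le_abs _).trans hhw))).2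
  have hsub : ∫ z, (w - h).1 z ∂ρ ≤ L (w - h) :=
    (hL (w - h) (sub_nonneg.2 ((le_abs_self _).trans hhw))).2
  rw [map_add] at hadd
  rw [map_sub] at hsub
  have hadd' : ∫ z, (w + h).1 z ∂ρ = ∫ z, w.1 z ∂ρ + ∫ z, h.1 z ∂ρ := integral_add hw_int hh_int
  have hsub' : ∫ z, (w - h).1 z ∂ρ = ∫ z, w.1 z ∂ρ - ∫ z, h.1 z ∂ρ := integral_sub hw_int hh_int
  linarith

lemma tendsto_integral_one_sub_cutoff [OpensMeasurableSpace Z] {ρ : Measure Z}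
    [IsFiniteMeasure ρ] {χ : ℕ → C_c(Z, ℝ)}
    (hχ : ∀ n z, χ n z ∈ Set.Icc (0 : ℝ) 1) (hχ_one : ∀ z, ∀ᶠ n in atTop, χ n z = 1) :
    Tendsto (fun n => ∫ z, (1 - χ n z) ∂ρ) atTop (𝓝 0) := by
  rw [← integral_zero Z ℝ (μ := ρ)]
  refine tendsto_integral_of_dominated_convergence (fun _ => 1)
    (fun n => (continuous_const.sub (χ n).continuous).aestronglyMeasurable)
    (integrable_const 1) (fun n => .of_forall fun z => ?_) (.of_forall fun z => ?_)
  · rw [Real.norm_of_nonneg (sub_nonneg.2 (hχ n z).2)]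
    exact sub_le_self _ (hχ n z).1
  · refine tendsto_const_nhds.congr' ?_
    filter_upwards [hχ_one z] with n hn using by simp [hn]

variable [T2Space Z] [LocallyCompactSpace Z] [BorelSpace Z]

lemma integrable_and_integral_le_of_forall_compactlySupported [SigmaCompactSpace Z]
    {ρ : Measure Z} [IsFiniteMeasureOnCompacts ρ] {h : C(Z, ℝ)} (hh : 0 ≤ h) {c : ℝ}
    (hc : ∀ f : C_c(Z, ℝ), 0 ≤ f.toContinuousMap → f.toContinuousMap ≤ h → ∫ z, f z ∂ρ ≤ c) :
    Integrable h ρ ∧ ∫ z, h z ∂ρ ≤ c := by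
  obtain ⟨χ, hχ, hχ_one⟩ := exists_compactlySupported_eventually_eq_one (Z := Z)
  have hfatou : ∫⁻ z, ENNReal.ofReal (h z) ∂ρ ≤ ENNReal.ofReal c := by
    have htrunc (n : ℕ) : ∫⁻ z, ENNReal.ofReal ((h • χ n) z) ∂ρ ≤ ENNReal.ofReal c := by
      have hnonneg (z : Z) : 0 ≤ (h • χ n) z := mul_nonneg (hh z) (hχ n z).1
      have hint : Integrable (h • χ n) ρ :=
        (h • χ n).continuous.integrable_of_hasCompactSupport (h • χ n).hasCompactSupport
      rw [← ofReal_integral_eq_lintegral_ofReal hint (.of_forall hnonneg)]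
      exact ENNReal.ofReal_le_ofReal <|
        hc _ hnonneg fun z => mul_le_of_le_one_right (hh z) (hχ n z).2
    calc ∫⁻ z, ENNReal.ofReal (h z) ∂ρ
        = ∫⁻ z, liminf (fun n => ENNReal.ofReal ((h • χ n) z)) atTop ∂ρ := by
          refine lintegral_congr fun z => (Tendsto.liminf_eq ?_).symm
          refine tendsto_const_nhds.congr' ?_
          filter_upwards [hχ_one z] with n hn
          simp [hn]
      _ ≤ liminf (fun n => ∫⁻ z, ENNReal.ofReal ((h • χ n) z) ∂ρ) atTop :=
          lintegral_liminf_le fun n => (h • χ n).continuous.measurable.ennreal_ofReal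
      _ ≤ ENNReal.ofReal c := liminf_le_of_le (by isBoundedDefault) fun b hb =>
          (hb.exists.choose_spec).trans (htrunc _)
  have hint : Integrable h ρ :=
    ⟨h.continuous.aestronglyMeasurable, (hasFiniteIntegral_iff_ofReal (.of_forall hh)).2
      (hfatou.trans_lt ENNReal.ofReal_lt_top)⟩
  have hc0 : 0 ≤ c := by simpa using hc 0 le_rfl hh
  refine ⟨hint, ?_⟩
  rwa [← ofReal_integral_eq_lintegral_ofReal hint (.of_forall hh),
    ENNReal.ofReal_le_ofReal_iff hc0] at hfatou

/-- The continuous compactly supported functions, as a subspace of `C(Z, ℝ)`. -/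
def compactlySupportedSubmodule (Z : Type*) [TopologicalSpace Z] : Submodule ℝ C(Z, ℝ) where
  carrier := {h | HasCompactSupport h}
  add_mem' := HasCompactSupport.add
  zero_mem' := .zero
  smul_mem' _ _ := HasCompactSupport.smul_left

lemma exists_measure_of_nonneg [SigmaCompactSpace Z] {W : Submodule ℝ C(Z, ℝ)}
    (hW : compactlySupportedSubmodule Z ≤ W) (L : W →ₗ[ℝ] ℝ)
    (hL : ∀ h : W, 0 ≤ (h : C(Z, ℝ)) → 0 ≤ L h) :
    ∃ ρ : Measure Z,
      (∀ f : C_c(Z, ℝ), ∫ z, f z ∂ρ = L ⟨f.toContinuousMap, hW f.hasCompactSupport⟩) ∧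
      ∀ h : W, 0 ≤ h.1 → Integrable h.1 ρ ∧ ∫ z, h.1 z ∂ρ ≤ L h := by
  let ι : C_c(Z, ℝ) →ₗ[ℝ] W :=
    { toFun f := ⟨f.toContinuousMap, hW f.hasCompactSupport⟩
      map_add' _ _ := rfl
      map_smul' _ _ := rfl }
  let Λ : C_c(Z, ℝ) →ₚ[ℝ] ℝ := .mk₀ (L ∘ₗ ι) fun f hf => hL _ hf
  have hΛ (f : C_c(Z, ℝ)) : ∫ z, f z ∂(RealRMK.rieszMeasure Λ) = L (ι f) :=
    RealRMK.integral_rieszMeasure Λ f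
  refine ⟨RealRMK.rieszMeasure Λ, hΛ, fun h hh => ?_⟩
  refine integrable_and_integral_le_of_forall_compactlySupported hh fun f _ hfh => ?_
  rw [hΛ, ← sub_nonneg, ← map_sub]
  exact hL _ (sub_nonneg.2 hfh)

end PositiveFunctionals

section CouplingDuality

variable {X Y : Type*} [TopologicalSpace X] [TopologicalSpace Y]
  [MeasurableSpace X] [MeasurableSpace Y]

/-- The continuous functions `(x, y) ↦ f x + g y` with `f` and `g` integrable. Every coupling of
`μ` and `ν` assigns the same integral to such a function. -/
def marginalSums (μ : Measure X) (ν : Measure Y) : Submodule ℝ C(X × Y, ℝ) where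
  carrier := {w | ∃ (f : C(X, ℝ)) (g : C(Y, ℝ)), Integrable f μ ∧ Integrable g ν ∧
    ∀ p, w p = f p.1 + g p.2}
  add_mem' := by
    rintro w w' ⟨f, g, hf, hg, hw⟩ ⟨f', g', hf', hg', hw'⟩
    exact ⟨f + f', g + g', hf.add hf', hg.add hg', fun p => by
      simp only [ContinuousMap.add_apply, hw, hw']; ring⟩
  zero_mem' := ⟨0, 0, integrable_zero _ _ _, integrable_zero _ _ _, fun p => by simp⟩
  smul_mem' := by
    rintro c w ⟨f, g, hf, hg, hw⟩
    exact ⟨c • f, c • g, hf.smul c, hg.smul c, fun p => by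
      simp only [ContinuousMap.smul_apply, hw, smul_add]⟩

/-- The continuous functions whose absolute value lies below an element of `marginalSums μ ν`;
they are integrable with respect to every coupling of `μ` and `ν`. -/
def marginallyDominated (μ : Measure X) (ν : Measure Y) : Submodule ℝ C(X × Y, ℝ) where
  carrier := {h | ∃ w ∈ marginalSums μ ν, |h| ≤ w}
  add_mem' := by
    rintro h h' ⟨w, hw, hhw⟩ ⟨w', hw', hhw'⟩
    exact ⟨w + w', add_mem hw hw', (abs_add_le h h').trans (add_le_add hhw hhw')⟩
  zero_mem' := ⟨0, zero_mem _, by simp⟩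
  smul_mem' := by
    rintro c h ⟨w, hw, hhw⟩
    refine ⟨|c| • w, Submodule.smul_mem _ _ hw, fun p => ?_⟩
    simpa [abs_mul] using mul_le_mul_of_nonneg_left (hhw p) (abs_nonneg c)

lemma comp_fst_mem_marginalSums {μ : Measure X} (ν : Measure Y) {f : C(X, ℝ)}
    (hf : Integrable f μ) : f.comp ContinuousMap.fst ∈ marginalSums μ ν :=
  ⟨f, 0, hf, integrable_zero _ _ _, fun p => by simp⟩

lemma comp_snd_mem_marginalSums (μ : Measure X) {ν : Measure Y} {g : C(Y, ℝ)}
    (hg : Integrable g ν) : g.comp ContinuousMap.snd ∈ marginalSums μ ν :=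
  ⟨0, g, integrable_zero _ _ _, hg, fun p => by simp⟩

lemma mem_marginallyDominated_of_abs_le {μ : Measure X} {ν : Measure Y} [IsFiniteMeasure μ]
    {h : C(X × Y, ℝ)} {M : ℝ} (hM : ∀ p, |h p| ≤ M) : h ∈ marginallyDominated μ ν :=
  ⟨.const _ M, comp_fst_mem_marginalSums ν (f := .const X M) (integrable_const M), hM⟩

lemma marginalSums_le_marginallyDominated
    (μ : Measure X) (ν : Measure Y) : marginalSums μ ν ≤ marginallyDominated μ ν := by
  rintro w ⟨f, g, hf, hg, hw⟩
  refine ⟨|f|.comp ContinuousMap.fst + |g|.comp ContinuousMap.snd,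
    add_mem (comp_fst_mem_marginalSums ν hf.abs) (comp_snd_mem_marginalSums μ hg.abs), fun p => ?_⟩
  simpa [hw] using abs_add_le (f p.1) (g p.2)

lemma compactlySupported_le_marginallyDominated (μ : Measure X) (ν : Measure Y)
    [IsFiniteMeasure μ] : compactlySupportedSubmodule (X × Y) ≤ marginallyDominated μ ν := by
  intro h hh
  obtain ⟨M, hM⟩ := hh.exists_bound_of_continuous h.continuous
  exact mem_marginallyDominated_of_abs_le hM

lemma integrable_and_integral_fst_add_snd {ρ : Measure (X × Y)} {f : C(X, ℝ)} {g : C(Y, ℝ)}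
    (hf : Integrable f ρ.fst) (hg : Integrable g ρ.snd) :
    Integrable (fun p : X × Y => f p.1 + g p.2) ρ ∧
      ∫ p, (f p.1 + g p.2) ∂ρ = ∫ x, f x ∂ρ.fst + ∫ y, g y ∂ρ.snd := by
  have hf' : Integrable (fun p : X × Y => f p.1) ρ := hf.comp_measurable measurable_fst
  have hg' : Integrable (fun p : X × Y => g p.2) ρ := hg.comp_measurable measurable_snd
  refine ⟨hf'.add hg', ?_⟩
  rw [integral_add hf' hg', Measure.fst, Measure.snd,
    integral_map measurable_fst.aemeasurable hf.aestronglyMeasurable,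
    integral_map measurable_snd.aemeasurable hg.aestronglyMeasurable]

lemma integrable_of_mem_marginalSums {ρ : Measure (X × Y)} {w : C(X × Y, ℝ)}
    (hw : w ∈ marginalSums ρ.fst ρ.snd) : Integrable w ρ := by
  obtain ⟨f, g, hf, hg, hw⟩ := hw
  rw [funext hw]
  exact (integrable_and_integral_fst_add_snd hf hg).1

lemma integral_eq_of_mem_marginalSums {ρ ρ' : Measure (X × Y)} (hfst : ρ.fst = ρ'.fst)
    (hsnd : ρ.snd = ρ'.snd) {w : C(X × Y, ℝ)} (hw : w ∈ marginalSums ρ.fst ρ.snd) :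
    ∫ p, w p ∂ρ = ∫ p, w p ∂ρ' := by
  obtain ⟨f, g, hf, hg, hw⟩ := hw
  simp only [hw]
  rw [(integrable_and_integral_fst_add_snd hf hg).2, hfst, hsnd,
    ← (integrable_and_integral_fst_add_snd (hfst ▸ hf) (hsnd ▸ hg)).2]

/-- The integral on `marginalSums μ ν` that every coupling of `μ` and `ν` shares, encoded as the
integral against the independent coupling. -/
def marginalIntegral (μ : Measure X) (ν : Measure Y) [IsProbabilityMeasure μ]
    [IsProbabilityMeasure ν] : marginalSums μ ν →ₗ[ℝ] ℝ where
  toFun w := ∫ p, w.1 p ∂(μ.prod ν)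
  map_add' w w' := by
    have hint (w : marginalSums μ ν) : Integrable w.1 (μ.prod ν) :=
      integrable_of_mem_marginalSums (by simp)
    exact integral_add (hint w) (hint w')
  map_smul' c w := integral_const_mul c _

lemma marginalIntegral_apply {μ : Measure X} {ν : Measure Y} [IsProbabilityMeasure μ]
    [IsProbabilityMeasure ν] {w : marginalSums μ ν} {f : C(X, ℝ)} {g : C(Y, ℝ)}
    (hf : Integrable f μ) (hg : Integrable g ν) (hw : ∀ p, w.1 p = f p.1 + g p.2) :
    marginalIntegral μ ν w = ∫ x, f x ∂μ + ∫ y, g y ∂ν := by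
  have h := (integrable_and_integral_fst_add_snd (ρ := μ.prod ν) (f := f) (g := g)
    (by simpa using hf) (by simpa using hg)).2
  rw [Measure.fst_prod, Measure.snd_prod] at h
  rw [← h]
  exact integral_congr_ae (.of_forall hw)

variable {μ : Measure X} {ν : Measure Y} [IsProbabilityMeasure μ] [IsProbabilityMeasure ν]

/-- `L` is positive and extends `marginalIntegral μ ν`, as integration against any coupling of `μ`
and `ν` does. -/
structure IsPositiveExtension (L : marginallyDominated μ ν →ₗ[ℝ] ℝ) : Prop where
  apply_inclusion (w : marginalSums μ ν) :
    L (Submodule.inclusion (marginalSums_le_marginallyDominated μ ν) w) = marginalIntegral μ ν w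
  nonneg (h : marginallyDominated μ ν) : 0 ≤ h.1 → 0 ≤ L h

lemma exists_isPositiveExtension_nonneg {K : PointedCone ℝ C(X × Y, ℝ)}
    (hK : ∀ k ∈ K, ∀ w : marginalSums μ ν, k ≤ w → 0 ≤ marginalIntegral μ ν w) :
    ∃ L : marginallyDominated μ ν →ₗ[ℝ] ℝ, IsPositiveExtension L ∧ ∀ k, k.1 ∈ K → 0 ≤ L k := by
  let S := (marginalSums μ ν).submoduleOf (marginallyDominated μ ν)
  let I : marginallyDominated μ ν →ₗ.[ℝ] ℝ :=
    ⟨S, marginalIntegral μ ν ∘ₗ (marginallyDominated μ ν).subtype.restrict fun _ hw => hw⟩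
  let s := (K ⊔ PointedCone.positive ℝ C(X × Y, ℝ)).comap (marginallyDominated μ ν).subtype
  have hI_nonneg (w : I.domain) (hw : w.1 ∈ s) : 0 ≤ I w := by
    obtain ⟨k, hk, p, hp, hkp⟩ := Submodule.mem_sup.1 hw
    refine hK k hk ⟨w.1, w.2⟩ ?_
    exact (le_add_of_nonneg_right hp).trans_eq hkp
  have hI_cofinal (h : marginallyDominated μ ν) : ∃ w : I.domain, w.1 + h ∈ s := by
    obtain ⟨w, hw, hhw⟩ := h.2
    refine ⟨⟨⟨w, marginalSums_le_marginallyDominated μ ν hw⟩, hw⟩, Submodule.mem_sup_right ?_⟩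
    exact neg_le_iff_add_nonneg.1 ((neg_le_abs h.1).trans hhw)
  obtain ⟨L, hLI, hL⟩ := riesz_extension s I hI_nonneg hI_cofinal
  exact ⟨L, ⟨fun w => hLI ⟨⟨w.1, _⟩, w.2⟩, fun h hh => hL h (Submodule.mem_sup_right hh)⟩,
    fun k hk => hL k (Submodule.mem_sup_left hk)⟩

variable [BorelSpace X] [BorelSpace Y] [T2Space X] [T2Space Y]

/-- The function `(x, y) ↦ f x * g y`. -/
def tensorCompactlySupported (f : C_c(X, ℝ)) (g : C_c(Y, ℝ)) : C_c(X × Y, ℝ) where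
  toFun p := f p.1 * g p.2
  hasCompactSupport' := by
    refine .of_support_subset_isCompact
      (f.hasCompactSupport.isCompact.prod g.hasCompactSupport.isCompact) fun p hp => ?_
    exact ⟨subset_tsupport _ (left_ne_zero_of_mul hp), subset_tsupport _ (right_ne_zero_of_mul hp)⟩

section Representation

variable {L : marginallyDominated μ ν →ₗ[ℝ] ℝ} {ρ : Measure (X × Y)}

lemma IsPositiveExtension.sub_le_apply_tensor (hL : IsPositiveExtension L)
    {χ : C_c(X, ℝ)} {χ' : C_c(Y, ℝ)} (hχ : ∀ x, χ x ≤ 1) (hχ' : ∀ y, χ' y ≤ 1) :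
    1 - (∫ x, (1 - χ x) ∂μ + ∫ y, (1 - χ' y) ∂ν) ≤
      L ⟨(tensorCompactlySupported χ χ').toContinuousMap,
        compactlySupported_le_marginallyDominated μ ν
          (tensorCompactlySupported χ χ').hasCompactSupport⟩ := by
  set cut : marginallyDominated μ ν := ⟨(tensorCompactlySupported χ χ').toContinuousMap, _⟩
  have hχ_int : Integrable (1 - χ.toContinuousMap : C(X, ℝ)) μ :=
    (integrable_const 1).sub (χ.continuous.integrable_of_hasCompactSupport χ.hasCompactSupport)
  have hχ'_int : Integrable (1 - χ'.toContinuousMap : C(Y, ℝ)) ν :=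
    (integrable_const 1).sub (χ'.continuous.integrable_of_hasCompactSupport χ'.hasCompactSupport)
  let one : marginalSums μ ν := ⟨1, comp_fst_mem_marginalSums ν (f := 1) (integrable_const 1)⟩
  let tail : marginalSums μ ν := ⟨(1 - χ.toContinuousMap).comp ContinuousMap.fst +
    (1 - χ'.toContinuousMap).comp ContinuousMap.snd,
    add_mem (comp_fst_mem_marginalSums ν hχ_int) (comp_snd_mem_marginalSums μ hχ'_int)⟩
  let ι := Submodule.inclusion (marginalSums_le_marginallyDominated μ ν)
  have hL_apply (w : marginalSums μ ν) : L (ι w) = marginalIntegral μ ν w := hL.apply_inclusion w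
  have hunion : 0 ≤ L (ι tail + cut - ι one) := by
    refine hL.nonneg _ fun p => ?_
    have : 0 ≤ (1 - χ p.1) * (1 - χ' p.2) := mul_nonneg (sub_nonneg.2 (hχ _)) (sub_nonneg.2 (hχ' _))
    change 0 ≤ (1 - χ p.1) + (1 - χ' p.2) + χ p.1 * χ' p.2 - 1
    linarith
  have hone : marginalIntegral μ ν one = 1 := by simp [one, marginalIntegral]
  have htail : marginalIntegral μ ν tail = ∫ x, (1 - χ x) ∂μ + ∫ y, (1 - χ' y) ∂ν :=
    marginalIntegral_apply hχ_int hχ'_int fun _ => rfl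
  rw [map_sub, map_add, hL_apply, hL_apply, hone, htail] at hunion
  linarith

variable [LocallyCompactSpace X] [LocallyCompactSpace Y]
  [SecondCountableTopology X] [SecondCountableTopology Y]

lemma IsPositiveExtension.one_le_integral_one [IsFiniteMeasure ρ] (hL : IsPositiveExtension L)
    (hρ : ∀ f : C_c(X × Y, ℝ), ∫ p, f p ∂ρ = L ⟨f.toContinuousMap,
      compactlySupported_le_marginallyDominated μ ν f.hasCompactSupport⟩) :
    1 ≤ ∫ _, (1 : ℝ) ∂ρ := by
  obtain ⟨χ, hχ, hχ_one⟩ := exists_compactlySupported_eventually_eq_one (Z := X)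
  obtain ⟨χ', hχ', hχ'_one⟩ := exists_compactlySupported_eventually_eq_one (Z := Y)
  have htail := (tendsto_integral_one_sub_cutoff (ρ := μ) hχ hχ_one).add
    (tendsto_integral_one_sub_cutoff (ρ := ν) hχ' hχ'_one)
  have hlim := htail.const_sub 1
  rw [add_zero, sub_zero] at hlim
  refine le_of_tendsto' hlim fun n => ?_
  let cut := tensorCompactlySupported (χ n) (χ' n)
  calc 1 - (∫ x, (1 - χ n x) ∂μ + ∫ y, (1 - χ' n y) ∂ν)
      ≤ L ⟨cut.toContinuousMap, _⟩ :=
        hL.sub_le_apply_tensor (fun x => (hχ n x).2) fun y => (hχ' n y).2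
    _ = ∫ p, cut p ∂ρ := (hρ cut).symm
    _ ≤ ∫ _, (1 : ℝ) ∂ρ :=
        integral_mono (cut.continuous.integrable_of_hasCompactSupport cut.hasCompactSupport)
          (integrable_const 1) fun p => mul_le_one₀ (hχ n p.1).2 (hχ' n p.2).1 (hχ' n p.2).2

lemma fst_eq_and_snd_eq_of_integral_eq_marginalIntegral [IsFiniteMeasure ρ]
    (hρ : ∀ (w : marginalSums μ ν) (M : ℝ), (∀ p, |w.1 p| ≤ M) →
      ∫ p, w.1 p ∂ρ = marginalIntegral μ ν w) :
    ρ.fst = μ ∧ ρ.snd = ν := by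
  constructor <;> refine ext_of_forall_integral_eq_of_IsFiniteMeasure fun f => ?_
  · rw [Measure.fst, integral_map measurable_fst.aemeasurable f.continuous.aestronglyMeasurable]
    let w : marginalSums μ ν :=
      ⟨f.toContinuousMap.comp ContinuousMap.fst, comp_fst_mem_marginalSums ν (f.integrable μ)⟩
    refine (hρ w ‖f‖ fun p => f.norm_coe_le_norm p.1).trans ?_
    simpa using marginalIntegral_apply (f.integrable μ) (integrable_zero Y ℝ ν) (g := 0)
      fun p => (add_zero (f p.1)).symm
  · rw [Measure.snd, integral_map measurable_snd.aemeasurable f.continuous.aestronglyMeasurable]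
    let w : marginalSums μ ν :=
      ⟨f.toContinuousMap.comp ContinuousMap.snd, comp_snd_mem_marginalSums μ (f.integrable ν)⟩
    refine (hρ w ‖f‖ fun p => f.norm_coe_le_norm p.2).trans ?_
    simpa using marginalIntegral_apply (integrable_zero X ℝ μ) (f.integrable ν) (f := 0)
      fun p => (zero_add (f p.2)).symm

lemma IsPositiveExtension.exists_coupling (hL : IsPositiveExtension L) :
    ∃ ρ : Measure (X × Y), ρ.fst = μ ∧ ρ.snd = ν ∧ ∀ h, ∫ p, h.1 p ∂ρ = L h := by
  obtain ⟨ρ, hρ_cc, hρ⟩ := exists_measure_of_nonneg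
    (compactlySupported_le_marginallyDominated μ ν) L hL.nonneg
  let ι := Submodule.inclusion (marginalSums_le_marginallyDominated μ ν)
  have hL_apply (w : marginalSums μ ν) : L (ι w) = marginalIntegral μ ν w := hL.apply_inclusion w
  let const (M : ℝ) : marginalSums μ ν :=
    ⟨.const _ M, comp_fst_mem_marginalSums ν (f := .const X M) (integrable_const M)⟩
  have hconst (M : ℝ) : L (ι (const M)) = M := by
    simp [hL_apply, const, marginalIntegral]
  have hone := hρ (ι (const 1)) fun _ => zero_le_one
  have : IsFiniteMeasure ρ := (integrable_const_iff_isFiniteMeasure one_ne_zero).1 hone.1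
  have hmass : ∫ _, (1 : ℝ) ∂ρ = 1 := (hone.2.trans_eq (hconst 1)).antisymm
    (hL.one_le_integral_one hρ_cc)
  have hbounded (h : marginallyDominated μ ν) (M : ℝ) (hM : ∀ p, |h.1 p| ≤ M) :
      ∫ p, h.1 p ∂ρ = L h := by
    refine integral_eq_of_abs_le hρ (w := ι (const M)) hM ?_
    calc ∫ _, M ∂ρ = M * ∫ _, (1 : ℝ) ∂ρ := by rw [← integral_const_mul, mul_one]
      _ = L (ι (const M)) := by rw [hmass, hconst, mul_one]
  obtain ⟨hfst, hsnd⟩ : ρ.fst = μ ∧ ρ.snd = ν :=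
    fst_eq_and_snd_eq_of_integral_eq_marginalIntegral fun w M hM =>
      (hbounded (ι w) M hM).trans (hL_apply w)
  refine ⟨ρ, hfst, hsnd, fun h => ?_⟩
  obtain ⟨w, hw, hhw⟩ := h.2
  refine integral_eq_of_abs_le hρ (w := ι ⟨w, hw⟩) hhw ?_
  rw [hL_apply]
  exact integral_eq_of_mem_marginalSums (by simp [hfst]) (by simp [hsnd]) (by rwa [hfst, hsnd])

end Representation

theorem exists_coupling_forall_integral_nonneg
    [LocallyCompactSpace X] [LocallyCompactSpace Y]
    [SecondCountableTopology X] [SecondCountableTopology Y]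
    {K : PointedCone ℝ C(X × Y, ℝ)} (hK_dom : ∀ k ∈ K, k ∈ marginallyDominated μ ν)
    (hK : ∀ k ∈ K, ∀ w : marginalSums μ ν, k ≤ w → 0 ≤ marginalIntegral μ ν w) :
    ∃ ρ : Measure (X × Y), ρ.fst = μ ∧ ρ.snd = ν ∧ ∀ k ∈ K, 0 ≤ ∫ p, k p ∂ρ := by
  obtain ⟨L, hL, hLK⟩ := exists_isPositiveExtension_nonneg hK
  obtain ⟨ρ, hfst, hsnd, hρ⟩ := hL.exists_coupling
  refine ⟨ρ, hfst, hsnd, fun k hk => ?_⟩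
  exact (hLK ⟨k, hK_dom k hk⟩ hk).trans_eq (hρ _).symm

end CouplingDuality

lemma measure_le_of_forall_lintegral_le {S : Type*} [TopologicalSpace S] [HasOuterApproxClosed S]
    [MeasurableSpace S] [BorelSpace S] {ρ ρ' : Measure S} [IsFiniteMeasure ρ] [IsFiniteMeasure ρ']
    [ρ.WeaklyRegular]
    (h : ∀ β : S →ᵇ ℝ≥0, ∫⁻ x, β x ∂ρ ≤ ∫⁻ x, β x ∂ρ') : ρ ≤ ρ' := by
  have hclosed (F : Set S) (hF : IsClosed F) : ρ F ≤ ρ' F :=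
    le_of_tendsto_of_tendsto' (HasOuterApproxClosed.tendsto_lintegral_apprSeq hF ρ)
      (HasOuterApproxClosed.tendsto_lintegral_apprSeq hF ρ') fun n => h (hF.apprSeq n)
  refine Measure.le_iff.2 fun s hs => ?_
  rw [hs.measure_eq_iSup_isClosed_of_ne_top (measure_ne_top ρ s)]
  exact iSup₂_le fun F hFs => iSup_le fun hF => (hclosed F hF).trans (measure_mono hFs)

section ConditionalExpectation

variable {Ω : Type*} [MeasurableSpace Ω] {P : Measure Ω}

lemma integral_nonneg_iff_lintegral_neg_le {D : Ω → ℝ} (hD : Integrable D P) :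
    0 ≤ ∫ ω, D ω ∂P ↔ ∫⁻ ω, ENNReal.ofReal (-D ω) ∂P ≤ ∫⁻ ω, ENNReal.ofReal (D ω) ∂P := by
  rw [integral_eq_lintegral_pos_part_sub_lintegral_neg_part hD, sub_nonneg]
  exact ENNReal.toReal_le_toReal hD.neg.lintegral_lt_top.ne hD.lintegral_lt_top.ne

variable {S : Type*} [MeasurableSpace S] {X : Ω → S} {D : Ω → ℝ}

lemma lintegral_map_withDensity_ofReal (hX : Measurable X) (hD : Integrable D P) {β : S → ℝ≥0}
    (hβ : Measurable β) :
    ∫⁻ x, β x ∂((P.withDensity fun ω => ENNReal.ofReal (D ω)).map X) =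
      ∫⁻ ω, ENNReal.ofReal (β (X ω) * D ω) ∂P := by
  have hβX : AEMeasurable (fun ω => (β (X ω) : ℝ≥0∞)) P :=
    (hβ.comp hX).coe_nnreal_ennreal.aemeasurable
  rw [lintegral_map hβ.coe_nnreal_ennreal hX,
    lintegral_withDensity_eq_lintegral_mul₀ hD.aemeasurable.ennreal_ofReal hβX]
  refine lintegral_congr fun ω => ?_
  rw [Pi.mul_apply, mul_comm, ENNReal.ofReal_mul (β (X ω)).coe_nonneg, ENNReal.ofReal_coe_nnreal]

lemma setIntegral_preimage_nonneg_of_forall_boundedContinuous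
    [TopologicalSpace S] [TopologicalSpace.PseudoMetrizableSpace S] [BorelSpace S]
    (hX : Measurable X) (hD : Integrable D P)
    (hβ : ∀ β : S →ᵇ ℝ≥0, 0 ≤ ∫ ω, β (X ω) * D ω ∂P) {t : Set S} (ht : MeasurableSet t) :
    0 ≤ ∫ ω in X ⁻¹' t, D ω ∂P := by
  let push (D : Ω → ℝ) : Measure S := (P.withDensity fun ω => ENNReal.ofReal (D ω)).map X
  have hpush (D : Ω → ℝ) : push D t = ∫⁻ ω in X ⁻¹' t, ENNReal.ofReal (D ω) ∂P := by
    rw [Measure.map_apply hX ht, withDensity_apply _ (hX ht)]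
  have hfinite {D : Ω → ℝ} (hD : Integrable D P) : IsFiniteMeasure (push D) :=
    have := isFiniteMeasure_withDensity_ofReal hD.2
    inferInstance
  have := hfinite hD
  have := hfinite hD.neg
  have hle : push (-D) ≤ push D := by
    refine measure_le_of_forall_lintegral_le fun β => ?_
    have hβD : Integrable (fun ω => β (X ω) * D ω) P :=
      hD.bdd_mul (β.continuous.measurable.comp hX).coe_nnreal_real.aestronglyMeasurable
        (.of_forall fun ω => by
          simpa using NNReal.coe_le_coe.2 (BoundedContinuousFunction.NNReal.upper_bound β (X ω)))
    rw [lintegral_map_withDensity_ofReal hX hD β.continuous.measurable,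
      lintegral_map_withDensity_ofReal hX hD.neg β.continuous.measurable]
    simpa only [Pi.neg_apply, mul_neg] using (integral_nonneg_iff_lintegral_neg_le hβD).1 (hβ β)
  rw [integral_nonneg_iff_lintegral_neg_le hD.integrableOn]
  have h := hle t
  rwa [hpush, hpush] at h

lemma ae_nonneg_condExp_comap [IsFiniteMeasure P] (hX : Measurable X) (hD : Integrable D P)
    (h : ∀ t, MeasurableSet t → 0 ≤ ∫ ω in X ⁻¹' t, D ω ∂P) :
    0 ≤ᵐ[P] P[D | MeasurableSpace.comap X inferInstance] := by
  have hm := hX.comap_le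
  refine ae_of_ae_trim hm (ae_nonneg_of_forall_setIntegral_nonneg
    (integrable_condExp.trim hm stronglyMeasurable_condExp) fun s hs _ => ?_)
  rw [← setIntegral_trim hm stronglyMeasurable_condExp hs, setIntegral_condExp hm hD hs]
  obtain ⟨t, ht, rfl⟩ := hs
  exact h t ht

end ConditionalExpectation

section Suprema

variable {ι : Type*} [Nonempty ι]

lemma convexOn_iSup {E : Type*} [AddCommMonoid E] [Module ℝ E] {s : Set E} {a : ι → E → ℝ}
    (hs : Convex ℝ s) (ha : ∀ i, ConvexOn ℝ s (a i))
    (hbdd : ∀ x ∈ s, BddAbove (Set.range fun i => a i x)) :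
    ConvexOn ℝ s fun x => ⨆ i, a i x := by
  refine ⟨hs, fun x hx y hy t u ht hu htu => ciSup_le fun i => ?_⟩
  calc a i (t • x + u • y) ≤ t • a i x + u • a i y := (ha i).2 hx hy ht hu htu
    _ ≤ t • (⨆ i, a i x) + u • ⨆ i, a i y := by
      gcongr
      exacts [le_ciSup (hbdd x hx) i, le_ciSup (hbdd y hy) i]

lemma lipschitzWith_iSup {α : Type*} [PseudoMetricSpace α] {B : ℝ≥0} {a : ι → α → ℝ}
    (ha : ∀ i, LipschitzWith B (a i)) (hbdd : ∀ x, BddAbove (Set.range fun i => a i x)) :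
    LipschitzWith B fun x => ⨆ i, a i x := by
  refine .of_le_add_mul B fun x y => ciSup_le fun i => ?_
  calc a i x ≤ a i y + B * dist x y := (ha i).le_add_mul x y
    _ ≤ (⨆ i, a i y) + B * dist x y := by gcongr; exact le_ciSup (hbdd y) i

end Suprema

lemma integrable_of_lipschitzWith {E : Type*} [NormedAddCommGroup E] [MeasurableSpace E]
    {μ : Measure E} [IsFiniteMeasure μ]
    (hμ : Integrable (fun x => x) μ) {B : ℝ≥0} {φ : E → ℝ} (hφ : LipschitzWith B φ) :
    Integrable φ μ := by
  have hsub : LipschitzWith (B + 0) fun x => φ x - φ 0 := hφ.sub (.const _)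
  have hint : Integrable (fun x => φ x - φ 0) μ :=
    memLp_one_iff_integrable.1 (hsub.comp_memLp (sub_self _) (memLp_one_iff_integrable.2 hμ))
  exact (hint.add (integrable_const (φ 0))).congr (.of_forall fun x => sub_add_cancel _ _)

lemma isProbabilityMeasure_of_fst {X Y : Type*} [MeasurableSpace X] [MeasurableSpace Y]
    {ρ : Measure (X × Y)} [IsProbabilityMeasure ρ.fst] : IsProbabilityMeasure ρ :=
  ⟨Measure.fst_univ.symm.trans measure_univ⟩

section ConeOrder

variable {E : Type*} [NormedAddCommGroup E] [NormedSpace ℝ E]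

/-- The functions that are increasing for the preorder on `E` with nonnegative cone `C`. -/
def ConeMono (C : ProperCone ℝ E) (φ : E → ℝ) : Prop :=
  ∀ ⦃x y⦄, y - x ∈ C → φ x ≤ φ y

/-- The dual cone: the continuous linear functionals that are nonnegative on `C`. -/
abbrev dualCone (C : ProperCone ℝ E) : PointedCone ℝ (StrongDual ℝ E) :=
  .dual (topDualPairing ℝ E).flip C

lemma mem_dualCone {C : ProperCone ℝ E} {b : StrongDual ℝ E} :
    b ∈ dualCone C ↔ ∀ x ∈ C, 0 ≤ b x :=
  .rfl

lemma exists_lipschitz_convexOn_coneMono_between {C : ProperCone ℝ E} {B : ℝ≥0}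
    {b : E → StrongDual ℝ E} {f g : E → ℝ} (hb : ∀ x, b x ∈ dualCone C) (hB : ∀ x, ‖b x‖₊ ≤ B)
    (hfg : ∀ x y, b x (y - x) ≤ f x + g y) :
    ∃ φ : E → ℝ, ConvexOn ℝ Set.univ φ ∧ ConeMono C φ ∧ LipschitzWith B φ ∧
      (∀ x, -f x ≤ φ x) ∧ ∀ y, φ y ≤ g y := by
  let a (x y : E) : ℝ := b x (y - x) - f x
  have ha_le (x y : E) : a x y ≤ g y := sub_le_iff_le_add'.2 (hfg x y)
  have hbdd (y : E) : BddAbove (Set.range fun x => a x y) :=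
    ⟨g y, Set.forall_mem_range.2 fun x => ha_le x y⟩
  have ha_eq (x : E) : a x = fun y => b x y - (b x x + f x) := by
    funext y
    simp only [a, map_sub]
    ring
  refine ⟨fun y => ⨆ x, a x y, convexOn_iSup convex_univ (fun x => ?_) fun y _ => hbdd y,
    fun y z hyz => ciSup_mono (hbdd z) fun x => ?_, lipschitzWith_iSup (fun x => ?_) hbdd,
    fun x => ?_, fun y => ciSup_le fun x => ha_le x y⟩
  · rw [ha_eq]
    exact ((b x).toLinearMap.convexOn convex_univ).add_const _
  · have := mem_dualCone.1 (hb x) _ hyz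
    simp only [ha_eq, map_sub] at this ⊢
    linarith
  · rw [ha_eq]
    simpa using ((b x).lipschitz.weaken (hB x)).sub (.const (b x x + f x))
  · simpa [a] using le_ciSup (hbdd x) x

lemma ae_mem_of_forall_dualCone {C : ProperCone ℝ E} [SecondCountableTopology (StrongDual ℝ E)]
    {Ω : Type*} [MeasurableSpace Ω] {P : Measure Ω} {Z : Ω → E}
    (hZ : ∀ b ∈ dualCone C, ∀ᵐ ω ∂P, 0 ≤ b (Z ω)) : ∀ᵐ ω ∂P, Z ω ∈ C := by
  obtain ⟨T, hT_dual, hT_countable, hT_dense⟩ :=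
    (TopologicalSpace.IsSeparable.of_separableSpace
      (dualCone C : Set (StrongDual ℝ E))).exists_countable_dense_subset
  filter_upwards [(ae_ball_iff hT_countable).2 fun b hb => hZ b (hT_dual hb)] with ω hω
  have hclosed : IsClosed {b : StrongDual ℝ E | 0 ≤ b (Z ω)} :=
    isClosed_le continuous_const (ContinuousLinearMap.apply ℝ ℝ (Z ω)).continuous
  by_contra hZω
  obtain ⟨b, hb, hbZ⟩ := C.hyperplane_separation_point hZω
  exact hbZ.not_ge (closure_minimal hω hclosed (hT_dense hb))

variable [MeasurableSpace E]

/-- The increasing convex order for the preorder on `E` with nonnegative cone `C`. The cones `⊥`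
and the positive orthant of `ℝ^d` give the convex and the increasing convex order. -/
def ConeIncConvexOrder (C : ProperCone ℝ E) (μ ν : Measure E) : Prop :=
  ∀ φ : E → ℝ, ConvexOn ℝ Set.univ φ → ConeMono C φ → Integrable φ μ → Integrable φ ν →
    ∫ x, φ x ∂μ ≤ ∫ x, φ x ∂ν

/-- Under `ρ`, the second coordinate dominates the first one in conditional expectation, for the
preorder on `E` with nonnegative cone `C`. For `C = ⊥` this is the martingale property. -/
def IsConeSubmartingaleCoupling (C : ProperCone ℝ E) (ρ : Measure (E × E)) : Prop :=
  ∀ᵐ p ∂ρ, ρ[Prod.snd | MeasurableSpace.comap Prod.fst inferInstance] p - p.1 ∈ C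

/-- The functions `(x, y) ↦ b x (y - x)` with `b` bounded, continuous and valued in the dual cone.
Couplings that integrate all of them to nonnegative numbers are submartingale couplings. -/
def submartingaleTestCone (C : ProperCone ℝ E) : PointedCone ℝ C(E × E, ℝ) where
  carrier := {k | ∃ b : E →ᵇ StrongDual ℝ E, (∀ x, b x ∈ dualCone C) ∧ ∀ p, k p = b p.1 (p.2 - p.1)}
  add_mem' := by
    rintro k k' ⟨b, hb, hk⟩ ⟨b', hb', hk'⟩
    exact ⟨b + b', fun x => add_mem (hb x) (hb' x), fun p => by simp [hk, hk']⟩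
  zero_mem' := ⟨0, fun _ => zero_mem _, fun p => by simp⟩
  smul_mem' := by
    rintro c k ⟨b, hb, hk⟩
    exact ⟨c.1 • b, fun x => Submodule.smul_mem _ c (hb x), fun p => congrArg (c.1 * ·) (hk p)⟩

variable {C : ProperCone ℝ E} {μ ν : Measure E}

lemma mem_marginallyDominated_of_mem_submartingaleTestCone
    (hμ : Integrable (fun x => x) μ) (hν : Integrable (fun x => x) ν) {k : C(E × E, ℝ)}
    (hk : k ∈ submartingaleTestCone C) : k ∈ marginallyDominated μ ν := by
  obtain ⟨b, -, hk⟩ := hk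
  let r : C(E, ℝ) := ⟨fun x => ‖b‖ * ‖x‖, by fun_prop⟩
  refine ⟨r.comp ContinuousMap.fst + r.comp ContinuousMap.snd,
    add_mem (comp_fst_mem_marginalSums ν (hμ.norm.const_mul _))
      (comp_snd_mem_marginalSums μ (hν.norm.const_mul _)), fun p => ?_⟩
  calc |k p| = ‖b p.1 (p.2 - p.1)‖ := by rw [hk, Real.norm_eq_abs]
    _ ≤ ‖b‖ * ‖p.2 - p.1‖ := (b p.1).le_of_opNorm_le (b.norm_coe_le_norm _) _
    _ ≤ ‖b‖ * (‖p.1‖ + ‖p.2‖) := by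
      gcongr
      exact (norm_sub_le _ _).trans_eq (add_comm _ _)
    _ = ‖b‖ * ‖p.1‖ + ‖b‖ * ‖p.2‖ := mul_add _ _ _

lemma marginalIntegral_nonneg_of_coneIncConvexOrder [IsProbabilityMeasure μ]
    [IsProbabilityMeasure ν] (hμ : Integrable (fun x => x) μ) (hν : Integrable (fun x => x) ν)
    (hμν : ConeIncConvexOrder C μ ν) {k : C(E × E, ℝ)} (hk : k ∈ submartingaleTestCone C)
    {w : marginalSums μ ν} (hkw : k ≤ w) : 0 ≤ marginalIntegral μ ν w := by
  obtain ⟨b, hb, hk⟩ := hk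
  have ⟨f, g, hf, hg, hw⟩ := w.2
  obtain ⟨φ, hφ_conv, hφ_mono, hφ_lip, hfφ, hφg⟩ :=
    exists_lipschitz_convexOn_coneMono_between (f := f) (g := g) hb (B := ‖b‖₊)
      (fun x => b.norm_coe_le_norm x)
      fun x y => (hk (x, y)).symm.trans_le ((hkw (x, y)).trans_eq (hw (x, y)))
  have hφμ := integrable_of_lipschitzWith hμ hφ_lip
  have hφν := integrable_of_lipschitzWith hν hφ_lip
  have hneg_f : ∫ x, -f x ∂μ ≤ ∫ x, φ x ∂μ := integral_mono hf.neg hφμ hfφ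
  calc 0 ≤ ∫ y, φ y ∂ν - ∫ x, φ x ∂μ := sub_nonneg.2 (hμν φ hφ_conv hφ_mono hφμ hφν)
    _ ≤ ∫ y, g y ∂ν - ∫ x, -f x ∂μ := sub_le_sub (integral_mono hφν hg hφg) hneg_f
    _ = ∫ x, f x ∂μ + ∫ y, g y ∂ν := by rw [integral_neg, sub_neg_eq_add, add_comm]
    _ = marginalIntegral μ ν w := (marginalIntegral_apply hf hg hw).symm

variable [BorelSpace E]

section Submartingale

variable {ρ : Measure (E × E)} [IsFiniteMeasure ρ]

lemma apply_condExp_snd_sub_fst_ae_eq [CompleteSpace E] [SecondCountableTopology E]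
    (hfst : Integrable Prod.fst ρ) (hsnd : Integrable Prod.snd ρ) (b : StrongDual ℝ E) :
    (fun p => b (ρ[Prod.snd | MeasurableSpace.comap Prod.fst inferInstance] p - p.1)) =ᵐ[ρ]
      ρ[fun p => b (p.2 - p.1) | MeasurableSpace.comap Prod.fst inferInstance] := by
  have hm := (measurable_fst : Measurable (Prod.fst : E × E → E)).comap_le
  have hfst_m : StronglyMeasurable[MeasurableSpace.comap Prod.fst inferInstance]
      (Prod.fst : E × E → E) :=
    (comap_measurable Prod.fst).stronglyMeasurable
  filter_upwards [condExp_sub hsnd hfst (MeasurableSpace.comap Prod.fst inferInstance),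
    b.comp_condExp_comm (hsnd.sub hfst)] with p hsub hcomm
  rw [condExp_of_stronglyMeasurable hm hfst_m hfst] at hsub
  rw [← Pi.sub_apply, ← hsub]
  exact hcomm

variable [FiniteDimensional ℝ E]

lemma isConeSubmartingaleCoupling_of_forall_boundedContinuous
    (hfst : Integrable Prod.fst ρ) (hsnd : Integrable Prod.snd ρ)
    (hρ : ∀ k ∈ submartingaleTestCone C, 0 ≤ ∫ p, k p ∂ρ) :
    IsConeSubmartingaleCoupling C ρ := by
  refine ae_mem_of_forall_dualCone fun b hb => ?_
  have hD : Integrable (fun p => b (p.2 - p.1)) ρ := b.integrable_comp (hsnd.sub hfst)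
  have htest (β : E →ᵇ ℝ≥0) : 0 ≤ ∫ p, β p.1 * b (p.2 - p.1) ∂ρ := by
    have hβ (x : E) : ‖(β x : ℝ) • b‖ ≤ nndist β 0 * ‖b‖ := by
      rw [norm_smul, Real.norm_of_nonneg (β x).coe_nonneg]
      gcongr
      exact BoundedContinuousFunction.NNReal.upper_bound β x
    refine hρ ⟨fun p => β p.1 * b (p.2 - p.1), by fun_prop⟩
      ⟨.ofNormedAddCommGroup (fun x => (β x : ℝ) • b) (by fun_prop) _ hβ, fun x => ?_, fun p => rfl⟩
    exact Submodule.smul_mem _ (β x) hb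
  have hD_condExp := ae_nonneg_condExp_comap measurable_fst hD fun t ht =>
    setIntegral_preimage_nonneg_of_forall_boundedContinuous measurable_fst hD htest ht
  filter_upwards [apply_condExp_snd_sub_fst_ae_eq hfst hsnd b, hD_condExp] with p hp hp_nonneg
  exact hp_nonneg.trans_eq hp.symm

lemma IsConeSubmartingaleCoupling.coneIncConvexOrder (hρ : IsConeSubmartingaleCoupling C ρ)
    (hsnd : Integrable Prod.snd ρ) : ConeIncConvexOrder C ρ.fst ρ.snd := by
  intro φ hφ_conv hφ_mono hφ_fst hφ_snd
  have hφ : Continuous φ := hφ_conv.locallyLipschitz.continuous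
  have hm := (measurable_fst : Measurable (Prod.fst : E × E → E)).comap_le
  have hφ_snd' : Integrable (fun p => φ p.2) ρ := hφ_snd.comp_measurable measurable_snd
  calc ∫ x, φ x ∂ρ.fst = ∫ p, φ p.1 ∂ρ :=
        integral_map measurable_fst.aemeasurable hφ.aestronglyMeasurable
    _ ≤ ∫ p, (ρ[fun p => φ p.2 | MeasurableSpace.comap Prod.fst inferInstance]) p ∂ρ := by
        refine integral_mono_ae (hφ_fst.comp_measurable measurable_fst) integrable_condExp ?_
        filter_upwards [hφ_conv.map_condExp_le_of_finiteDimensional hm hsnd hφ_snd', hρ]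
          with p hJensen hp
        exact (hφ_mono hp).trans hJensen
    _ = ∫ p, φ p.2 ∂ρ := integral_condExp hm
    _ = ∫ y, φ y ∂ρ.snd :=
        (integral_map measurable_snd.aemeasurable hφ.aestronglyMeasurable).symm

end Submartingale

theorem strassen_submartingale_coupling_general [FiniteDimensional ℝ E] [IsProbabilityMeasure μ]
    [IsProbabilityMeasure ν] (hμ : Integrable (fun x => x) μ) (hν : Integrable (fun x => x) ν) :
    ConeIncConvexOrder C μ ν ↔
      ∃ ρ : Measure (E × E), ρ.fst = μ ∧ ρ.snd = ν ∧ IsConeSubmartingaleCoupling C ρ := by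
  constructor
  · intro hμν
    obtain ⟨ρ, rfl, rfl, hρ⟩ := exists_coupling_forall_integral_nonneg
      (K := submartingaleTestCone C)
      (fun k hk => mem_marginallyDominated_of_mem_submartingaleTestCone hμ hν hk)
      fun k hk w hkw => marginalIntegral_nonneg_of_coneIncConvexOrder hμ hν hμν hk hkw
    have := isProbabilityMeasure_of_fst (ρ := ρ)
    exact ⟨ρ, rfl, rfl, isConeSubmartingaleCoupling_of_forall_boundedContinuous
      (hμ.comp_measurable measurable_fst) (hν.comp_measurable measurable_snd) hρ⟩
  · rintro ⟨ρ, rfl, rfl, hρ⟩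
    have := isProbabilityMeasure_of_fst (ρ := ρ)
    exact hρ.coneIncConvexOrder (hν.comp_measurable measurable_snd)

end ConeOrder

/-- The cone of vectors with nonnegative coordinates; its preorder is the coordinatewise order. -/
def orthant (d : ℕ) : ProperCone ℝ (Euc d) :=
  (ProperCone.positive ℝ (Fin d → ℝ)).comap (EuclideanSpace.equiv (Fin d) ℝ : Euc d →L[ℝ] Fin d → ℝ)

lemma sub_mem_orthant {d : ℕ} {x y : Euc d} : y - x ∈ orthant d ↔ ∀ i, x i ≤ y i :=
  forall_congr' fun _ => sub_nonneg

lemma coneMono_orthant_iff {d : ℕ} {φ : Euc d → ℝ} : ConeMono (orthant d) φ ↔ CoordMono φ :=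
  forall₂_congr fun _ _ => imp_congr_left sub_mem_orthant

lemma coneIncConvexOrder_orthant_iff {d : ℕ} {μ ν : Measure (Euc d)} :
    ConeIncConvexOrder (orthant d) μ ν ↔ IncConvexOrder μ ν :=
  forall₂_congr fun _ _ => imp_congr_left coneMono_orthant_iff

lemma isConeSubmartingaleCoupling_orthant_iff {d : ℕ} {lam : Measure (Euc d × Euc d)} :
    IsConeSubmartingaleCoupling (orthant d) lam ↔ IsSubmartingaleCoupling lam :=
  eventually_congr (.of_forall fun _ => sub_mem_orthant)

/-- Strassen's theorem (increasing convex order): μ ≤icx ν iff there is a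
submartingale coupling. -/
theorem strassen_submartingale_coupling
    (d : ℕ) (hd : 1 ≤ d) (μ ν : Measure (Euc d))
    [IsProbabilityMeasure μ] [IsProbabilityMeasure ν]
    (hμ : FiniteFirstMoment μ) (hν : FiniteFirstMoment ν) :
    IncConvexOrder μ ν ↔
      ∃ lam : Measure (Euc d × Euc d), IsProbabilityMeasure lam ∧
        IsCoupling lam μ ν ∧ IsSubmartingaleCoupling lam := by
  rw [← coneIncConvexOrder_orthant_iff, strassen_submartingale_coupling_general hμ hν]
  simp only [isConeSubmartingaleCoupling_orthant_iff]
  constructor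
  · rintro ⟨ρ, rfl, rfl, hρ⟩
    exact ⟨ρ, isProbabilityMeasure_of_fst, ⟨rfl, rfl⟩, hρ⟩
  · rintro ⟨ρ, -, ⟨hfst, hsnd⟩, hρ⟩
    exact ⟨ρ, hfst, hsnd, hρ⟩
end
end
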